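/- arXiv:math/0012024 — 3 statements merged into one kernel-verified Lean document; each statement's English description precedes it below -/
import Mathlib

section
/- Let (A, ⧢) be the shuffle algebra over ℚ on an alphabet X = {x₀, x₁, …}, and let C ⊂ A be the subalgebra spanned by words not beginning with x₁ and not ending with x₀. Then A is isomorphic as a commutative ℚ-algebra to the polynomial algebra C[x₀, x₁]; in particular, any ℚ-algebra morphism I : C → ℂ extends uniquely to an algebra morphism Ī : (A, ⧢) → ℂ with Ī(x₀) = Ī(x₁) = 0. -/
/-- The shuffle multiplicity: `shc u v w` is the coefficient of the word `w` in the
shuffle product `u ⧢ v`, defined by the usual recursion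
`1 ⧢ w = w ⧢ 1 = w`, `(xu) ⧢ (yv) = x(u ⧢ yv) + y(xu ⧢ v)`. -/
def shc {X : Type} [DecidableEq X] : List X → List X → List X → ℕ
  | u, v, [] => if u = [] ∧ v = [] then 1 else 0
  | u, v, c :: w =>
      (match u with
       | a :: u' => if a = c then shc u' v w else 0
       | [] => 0) +
      (match v with
       | b :: v' => if b = c then shc u v' w else 0
       | [] => 0)

/-- The shuffle product `u ⧢ v` of two words, as an element of the free ℚ-vector space
on words (all words appearing in `u ⧢ v` are permutations of `u ++ v`). -/
noncomputable def shPoly {X : Type} [DecidableEq X] (u v : List X) : List X →₀ ℚ :=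
  ∑ w ∈ (u ++ v).permutations.toFinset, (shc u v w : ℚ) • Finsupp.single w 1

/-- The shuffle product, extended bilinearly to the free ℚ-vector space on words. -/
noncomputable def mulSh {X : Type} [DecidableEq X] (f g : List X →₀ ℚ) : List X →₀ ℚ :=
  f.sum fun u cu => g.sum fun v cv => (cu * cv) • shPoly u v

/-- The span of the "convergent" words: those not beginning with the letter `a` and not
ending with the letter `b`. -/
noncomputable def goodSpan {X : Type} [DecidableEq X] (a b : X) :
    Submodule ℚ (List X →₀ ℚ) :=
  Submodule.span ℚ {p | ∃ w : List X,
    w.head? ≠ some a ∧ w.getLast? ≠ some b ∧ p = Finsupp.single w 1}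

open Polynomial in
theorem Polynomial.exists_derivative_eq {R : Type*} [CommRing R] [Algebra ℚ R] (q : R[X]) :
    ∃ p : R[X], derivative p = q := by
  induction q using Polynomial.induction_on' with
  | add p q hp hq =>
    obtain ⟨p', rfl⟩ := hp
    obtain ⟨q', rfl⟩ := hq
    exact ⟨p' + q', derivative_add⟩
  | monomial n a =>
    refine ⟨monomial (n + 1) (((n + 1 : ℚ)⁻¹) • a), ?_⟩
    have h : (algebraMap ℚ R) ((n : ℚ) + 1)⁻¹ * ((n : R) + 1) = 1 := by
      have h' : ((n : R) + 1) = algebraMap ℚ R ((n : ℚ) + 1) := by simp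
      rw [h', ← map_mul, inv_mul_cancel₀ (by positivity), map_one]
    rw [derivative_monomial, Algebra.smul_def, Nat.add_sub_cancel]
    congr 1
    push_cast
    linear_combination a * h

namespace Derivation

variable {A : Type*} [CommRing A] [Algebra ℚ A]

/-- The kernel of a derivation, as a subalgebra. -/
def constants (D : Derivation ℚ A A) : Subalgebra ℚ A where
  carrier := {a | D a = 0}
  mul_mem' := by
    intro a b ha hb
    simp only [Set.mem_ofPred_eq] at ha hb ⊢
    simp [ha, hb]
  add_mem' := by
    intro a b ha hb
    simp only [Set.mem_ofPred_eq] at ha hb ⊢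
    simp [ha, hb]
  algebraMap_mem' r := D.map_algebraMap r

/-- A derivation commuting with `D` restricts to the constants of `D`. -/
def restrictConstants (D E : Derivation ℚ A A) (h : ∀ a, D (E a) = E (D a)) :
    Derivation ℚ D.constants D.constants :=
  Derivation.mk' (E.toLinearMap.restrict (p := Subalgebra.toSubmodule D.constants)
    (q := Subalgebra.toSubmodule D.constants) fun a ha => by
      have ha' : D a = 0 := ha
      change D (E a) = 0
      rw [h, ha', map_zero]) fun a b => by
    ext
    exact E.leibniz a b

theorem coe_restrictConstants (D E : Derivation ℚ A A) (h : ∀ a, D (E a) = E (D a))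
    (a : D.constants) : (restrictConstants D E h a : A) = E a := rfl

open Polynomial

theorem apply_aeval_constants (D : Derivation ℚ A A) {s : A} (hs : D s = 1)
    (p : D.constants[X]) : D (aeval s p) = aeval s (derivative p) := by
  induction p using Polynomial.induction_on' with
  | add p q hp hq => simp [hp, hq]
  | monomial n a =>
    have ha : D (a : A) = 0 := a.2
    simp only [aeval_monomial, derivative_monomial, leibniz, leibniz_pow, hs, smul_eq_mul,
      map_mul, nsmul_eq_mul, Subalgebra.algebraMap_def, Algebra.algebraMap_self,
      RingHom.id_apply, ha]
    push_cast
    ring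

theorem aeval_constants_injective (D : Derivation ℚ A A) {s : A} (hs : D s = 1) :
    Function.Injective (aeval s : D.constants[X] →ₐ[D.constants] A) := by
  rw [injective_iff_map_eq_zero]
  suffices H : ∀ (n : ℕ) (p : D.constants[X]), p.natDegree ≤ n → aeval s p = 0 → p = 0 from
    fun p => H _ p le_rfl
  have : IsAddTorsionFree D.constants := IsAddTorsionFree.of_module_rat _
  intro n
  induction n with
  | zero =>
    intro p hp h
    rw [Nat.le_zero, natDegree_eq_zero] at hp
    obtain ⟨a, rfl⟩ := hp
    rw [aeval_C] at h
    have : a = 0 := Subtype.ext h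
    rw [this, C_0]
  | succ n ih =>
    intro p hp h
    have hd : derivative p = 0 := by
      refine ih _ ((natDegree_derivative_le p).trans (by omega)) ?_
      rw [← apply_aeval_constants D hs, h, map_zero]
    refine ih p ?_ h
    rw [derivative_eq_zero.1 hd]
    exact n.zero_le

theorem aeval_constants_surjective (D : Derivation ℚ A A) {s : A} (hs : D s = 1)
    (hD : ∀ a, ∃ n : ℕ, D^[n] a = 0) :
    Function.Surjective (aeval s : D.constants[X] →ₐ[D.constants] A) := by
  intro a
  obtain ⟨n, hn⟩ := hD a
  induction n generalizing a with
  | zero => exact ⟨0, by simpa using hn.symm⟩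
  | succ n ih =>
    obtain ⟨q, hq⟩ := ih (D a) hn
    obtain ⟨p, rfl⟩ := exists_derivative_eq q
    have h : D (a - aeval s p) = 0 := by
      rw [map_sub, apply_aeval_constants D hs, hq, sub_self]
    refine ⟨p + C ⟨a - aeval s p, h⟩, ?_⟩
    rw [map_add, aeval_C, Subalgebra.algebraMap_def]
    exact add_sub_cancel _ _

/-- If a locally nilpotent derivation `D` has a slice `s`, i.e. `D s = 1`, then `A` is
polynomial in `s` over the constants of `D`. -/
theorem exists_extension_of_slice (D : Derivation ℚ A A) {s : A} (hs : D s = 1)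
    (hD : ∀ a, ∃ n : ℕ, D^[n] a = 0) {B : Type*} [CommRing B] [Algebra ℚ B]
    (φ : D.constants →ₐ[ℚ] B) (b : B) :
    ∃ ψ : A →ₐ[ℚ] B, ψ s = b ∧ ∀ a : D.constants, ψ a = φ a := by
  let e : D.constants[X] ≃ₐ[ℚ] A := AlgEquiv.ofBijective ((aeval s).restrictScalars ℚ)
    ⟨aeval_constants_injective D hs, aeval_constants_surjective D hs hD⟩
  have he : ∀ p, e p = aeval s p := fun _ => rfl
  have hX : e.symm s = X := by rw [AlgEquiv.symm_apply_eq, he, aeval_X]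
  have hC : ∀ a : D.constants, e.symm a = C a := fun a => by
    rw [AlgEquiv.symm_apply_eq, he, aeval_C]
    rfl
  refine ⟨(eval₂AlgHom φ b fun _ => Commute.all _ _).comp e.symm.toAlgHom, ?_, fun a => ?_⟩
  · simp [hX]
  · simp [hC]

theorem algHom_ext_of_slice (D : Derivation ℚ A A) {s : A} (hs : D s = 1)
    (hD : ∀ a, ∃ n : ℕ, D^[n] a = 0) {B : Type*} [CommRing B] [Algebra ℚ B]
    {ψ χ : A →ₐ[ℚ] B} (h : ψ s = χ s) (hc : ∀ a : D.constants, ψ a = χ a) : ψ = χ := by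
  ext a
  obtain ⟨p, rfl⟩ := aeval_constants_surjective D hs hD a
  induction p using Polynomial.induction_on' with
  | add p q hp hq => simp [hp, hq]
  | monomial n a => simp [aeval_monomial, h, hc]

end Derivation

section Words

variable {X : Type}

/-- The shuffle product of two noncommutative power series, given by their coefficients;
removing a fixed first letter acts on it as a derivation. -/
def shuffleSeries (f g : List X → ℚ) : List X → ℚ
  | [] => f [] * g []
  | c :: w => shuffleSeries (fun t => f (c :: t)) g w + shuffleSeries f (fun t => g (c :: t)) w

theorem shuffleSeries_comm (f g : List X → ℚ) (w : List X) :
    shuffleSeries f g w = shuffleSeries g f w := by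
  induction w generalizing f g with
  | nil => exact mul_comm _ _
  | cons c w ih => rw [shuffleSeries, shuffleSeries, ih, ih f, add_comm]

theorem shuffleSeries_add_left (f f' g : List X → ℚ) (w : List X) :
    shuffleSeries (fun t => f t + f' t) g w = shuffleSeries f g w + shuffleSeries f' g w := by
  induction w generalizing f f' g with
  | nil => exact add_mul _ _ _
  | cons c w ih => simp only [shuffleSeries, ih]; ring

theorem shuffleSeries_add_right (f g g' : List X → ℚ) (w : List X) :
    shuffleSeries f (fun t => g t + g' t) w = shuffleSeries f g w + shuffleSeries f g' w := by
  simp only [shuffleSeries_comm f, shuffleSeries_add_left]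

theorem shuffleSeries_smul_left (r : ℚ) (f g : List X → ℚ) (w : List X) :
    shuffleSeries (fun t => r * f t) g w = r * shuffleSeries f g w := by
  induction w generalizing f g with
  | nil => exact mul_assoc _ _ _
  | cons c w ih => simp only [shuffleSeries, ih]; ring

theorem shuffleSeries_smul_right (r : ℚ) (f g : List X → ℚ) (w : List X) :
    shuffleSeries f (fun t => r * g t) w = r * shuffleSeries f g w := by
  simp only [shuffleSeries_comm f, shuffleSeries_smul_left]

theorem shuffleSeries_zero_left (g : List X → ℚ) (w : List X) :
    shuffleSeries (fun _ => 0) g w = 0 := by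
  simpa using shuffleSeries_smul_left 0 (fun _ => 0) g w

theorem shuffleSeries_zero_right (f : List X → ℚ) (w : List X) :
    shuffleSeries f (fun _ => 0) w = 0 := by
  rw [shuffleSeries_comm, shuffleSeries_zero_left]

theorem shuffleSeries_assoc (f g h : List X → ℚ) (w : List X) :
    shuffleSeries (shuffleSeries f g) h w = shuffleSeries f (shuffleSeries g h) w := by
  induction w generalizing f g h with
  | nil => exact mul_assoc _ _ _
  | cons c w ih =>
    simp only [shuffleSeries, shuffleSeries_add_left, shuffleSeries_add_right, ih]
    ring

theorem shuffleSeries_append_singleton (f g : List X → ℚ) (w : List X) (c : X) :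
    shuffleSeries f g (w ++ [c]) =
      shuffleSeries (fun t => f (t ++ [c])) g w + shuffleSeries f (fun t => g (t ++ [c])) w := by
  induction w generalizing f g with
  | nil => simp [shuffleSeries]
  | cons a w ih =>
    simp only [List.cons_append, shuffleSeries, ih]
    ring

theorem shuffleSeries_one_left (f : List X → ℚ) (w : List X) :
    shuffleSeries (Finsupp.single [] (1 : ℚ)) f w = f w := by
  induction w generalizing f with
  | nil => simp [shuffleSeries]
  | cons c w ih =>
    have h : (fun t => Finsupp.single [] (1 : ℚ) (c :: t)) = fun _ => 0 := by
      funext t; simp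
    rw [shuffleSeries, h, shuffleSeries_zero_left, ih, zero_add]

/-- The free `ℚ`-vector space on words, regarded as an algebra for the shuffle product. -/
def ShuffleAlgebra (X : Type) : Type := List X →₀ ℚ

namespace ShuffleAlgebra

noncomputable instance : AddCommGroup (ShuffleAlgebra X) :=
  inferInstanceAs (AddCommGroup (List X →₀ ℚ))

noncomputable instance : Module ℚ (ShuffleAlgebra X) :=
  inferInstanceAs (Module ℚ (List X →₀ ℚ))

/-- The coefficient of a word. -/
def coeff (f : ShuffleAlgebra X) : List X → ℚ := Finsupp.toFun f

theorem ext_of_coeff {f g : ShuffleAlgebra X} (h : ∀ w, f.coeff w = g.coeff w) : f = g :=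
  Finsupp.ext h

noncomputable instance : One (ShuffleAlgebra X) := ⟨(Finsupp.single [] 1 : List X →₀ ℚ)⟩

theorem coeff_add (f g : ShuffleAlgebra X) : (f + g).coeff = fun w => f.coeff w + g.coeff w := rfl

theorem coeff_smul (r : ℚ) (f : ShuffleAlgebra X) : (r • f).coeff = fun w => r * f.coeff w := rfl

theorem coeff_zero : (0 : ShuffleAlgebra X).coeff = fun _ => 0 := rfl

theorem coeff_one (w : List X) : (1 : ShuffleAlgebra X).coeff w = if [] = w then 1 else 0 :=
  Finsupp.single_apply

end ShuffleAlgebra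

variable [DecidableEq X]

theorem shc_eq_shuffleSeries (u v w : List X) :
    (shc u v w : ℚ) = shuffleSeries (Finsupp.single u (1 : ℚ)) (Finsupp.single v (1 : ℚ)) w := by
  induction w generalizing u v with
  | nil =>
    cases u <;> cases v <;> simp [shc, shuffleSeries]
  | cons c w ih =>
    have hnil : (fun t => Finsupp.single ([] : List X) (1 : ℚ) (c :: t)) = fun _ => 0 := by
      funext t; simp
    have hcons (a : X) (u : List X) : (fun t => Finsupp.single (a :: u) (1 : ℚ) (c :: t)) =
        if a = c then ⇑(Finsupp.single u (1 : ℚ)) else fun _ => 0 := by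
      funext t
      split_ifs with h
      · subst h; simp [Finsupp.single_apply]
      · simp [h]
    rw [shc.eq_def, shuffleSeries]
    dsimp only
    push_cast
    congr 1
    · rcases u with _ | ⟨a, u⟩
      · simp only [hnil, shuffleSeries_zero_left, Nat.cast_zero]
      · rw [hcons]
        split_ifs with h
        · simp only [h, if_true, ih]
        · simp only [h, if_false, shuffleSeries_zero_left, Nat.cast_zero]
    · rcases v with _ | ⟨b, v⟩
      · simp only [hnil, shuffleSeries_zero_right, Nat.cast_zero]
      · rw [hcons]
        split_ifs with h
        · simp only [h, if_true, ih]
        · simp only [h, if_false, shuffleSeries_zero_right, Nat.cast_zero]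

theorem perm_append_of_shc_ne_zero {u v w : List X} (h : shc u v w ≠ 0) : w.Perm (u ++ v) := by
  induction w generalizing u v with
  | nil =>
    by_cases h' : u = [] ∧ v = []
    · simp [h'.1, h'.2]
    · simp [shc, h'] at h
  | cons c w ih =>
    rw [shc.eq_def] at h
    dsimp only at h
    rcases not_and_or.1 (mt Nat.add_eq_zero_iff.2 h) with h | h
    · rcases u with _ | ⟨a, u⟩
      · exact absurd rfl h
      · obtain ⟨rfl, h'⟩ : a = c ∧ shc u v w ≠ 0 := by simpa using h
        exact (ih h').cons a
    · rcases v with _ | ⟨b, v⟩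
      · exact absurd rfl h
      · obtain ⟨rfl, h'⟩ : b = c ∧ shc u v w ≠ 0 := by simpa using h
        exact ((ih h').cons b).trans List.perm_middle.symm

theorem shPoly_apply (u v w : List X) : shPoly u v w = shc u v w := by
  simp only [shPoly, Finsupp.finsetSum_apply, Finsupp.smul_apply, Finsupp.single_apply,
    smul_eq_mul, mul_ite, mul_one, mul_zero, Finset.sum_ite_eq', List.mem_toFinset,
    List.mem_permutations]
  split_ifs with h
  · rfl
  · rw [eq_comm, Nat.cast_eq_zero]
    by_contra h'
    exact h (perm_append_of_shc_ne_zero h')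

theorem mulSh_apply (f g : List X →₀ ℚ) (w : List X) : mulSh f g w = shuffleSeries f g w := by
  induction f using Finsupp.induction_linear with
  | zero =>
    rw [mulSh, Finsupp.sum_zero_index]
    exact (shuffleSeries_zero_left g w).symm
  | add f f' hf hf' =>
    have h : mulSh (f + f') g = mulSh f g + mulSh f' g := by
      refine Finsupp.sum_add_index' (by simp) fun u a b => ?_
      simp only [add_mul, add_smul, Finsupp.sum_add]
    rw [h, Finsupp.add_apply, hf, hf', ← shuffleSeries_add_left]
    rfl
  | single u a =>
    induction g using Finsupp.induction_linear with
    | zero =>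
      have h : mulSh (Finsupp.single u a) 0 = 0 := by simp [mulSh]
      rw [h]
      exact (shuffleSeries_zero_right _ w).symm
    | add g g' hg hg' =>
      have h : mulSh (Finsupp.single u a) (g + g') =
          mulSh (Finsupp.single u a) g + mulSh (Finsupp.single u a) g' := by
        simp only [mulSh]
        rw [← Finsupp.sum_add]
        refine Finsupp.sum_congr fun t _ => ?_
        refine Finsupp.sum_add_index' (by simp) fun v b c => ?_
        rw [mul_add, add_smul]
      rw [h, Finsupp.add_apply, hg, hg', ← shuffleSeries_add_right]
      rfl
    | single v b =>
      have h (c : ℚ) (t : List X) : ⇑(Finsupp.single t c) =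
          fun s => c * Finsupp.single t (1 : ℚ) s := by
        funext s; simp [Finsupp.single_apply]
      rw [h a, h b, shuffleSeries_smul_left, shuffleSeries_smul_right, ← shc_eq_shuffleSeries]
      simp [mulSh, shPoly_apply, mul_assoc]

theorem mem_goodSpan_iff {a b : X} {p : List X →₀ ℚ} :
    p ∈ goodSpan a b ↔ (∀ w, p (a :: w) = 0) ∧ ∀ w, p (w ++ [b]) = 0 := by
  constructor
  · intro hp
    induction hp using Submodule.span_induction with
    | mem p hp =>
      obtain ⟨w, ha, hb, rfl⟩ := hp
      refine ⟨fun t => Finsupp.single_eq_of_ne' ?_, fun t => Finsupp.single_eq_of_ne' ?_⟩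
      · rintro rfl; simp at ha
      · rintro rfl; simp at hb
    | zero => simp
    | add p q _ _ hp hq => simp [hp, hq]
    | smul r p _ hp => simp [hp]
  · rintro ⟨ha, hb⟩
    rw [← Finsupp.sum_single p]
    refine Submodule.sum_mem _ fun w hw => ?_
    rw [← mul_one (p w), ← smul_eq_mul, ← Finsupp.smul_single]
    refine Submodule.smul_mem _ _ (Submodule.subset_span ⟨w, fun h => ?_, fun h => ?_, rfl⟩)
    · obtain ⟨t, rfl⟩ := List.head?_eq_some_iff.1 h
      exact Finsupp.mem_support_iff.1 hw (ha t)
    · obtain ⟨t, rfl⟩ := List.getLast?_eq_some_iff.1 h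
      exact Finsupp.mem_support_iff.1 hw (hb t)

namespace ShuffleAlgebra

noncomputable instance : Mul (ShuffleAlgebra X) := ⟨fun f g => mulSh f g⟩

theorem coeff_mul (f g : ShuffleAlgebra X) :
    (f * g).coeff = shuffleSeries f.coeff g.coeff :=
  funext (mulSh_apply f g)

protected theorem mul_comm (f g : ShuffleAlgebra X) : f * g = g * f :=
  ext_of_coeff fun w => by rw [coeff_mul, coeff_mul, shuffleSeries_comm]

protected theorem one_mul (f : ShuffleAlgebra X) : 1 * f = f :=
  ext_of_coeff fun w => by
    rw [coeff_mul]
    exact shuffleSeries_one_left f.coeff w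

protected theorem add_mul (f g h : ShuffleAlgebra X) : (f + g) * h = f * h + g * h :=
  ext_of_coeff fun w => by
    simp only [coeff_mul, coeff_add, shuffleSeries_add_left]

protected theorem zero_mul (f : ShuffleAlgebra X) : 0 * f = 0 :=
  ext_of_coeff fun w => by
    simp only [coeff_mul, coeff_zero, shuffleSeries_zero_left]

protected theorem smul_mul (r : ℚ) (f g : ShuffleAlgebra X) : (r • f) * g = r • (f * g) :=
  ext_of_coeff fun w => by
    simp only [coeff_mul, coeff_smul, shuffleSeries_smul_left]

noncomputable instance : CommRing (ShuffleAlgebra X) :=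
  { (inferInstance : AddCommGroup (ShuffleAlgebra X)),
    (inferInstance : Mul (ShuffleAlgebra X)),
    (inferInstance : One (ShuffleAlgebra X)) with
    mul_comm := ShuffleAlgebra.mul_comm
    mul_assoc := fun f g h => ext_of_coeff fun w => by
      simp only [coeff_mul, shuffleSeries_assoc]
    one_mul := ShuffleAlgebra.one_mul
    mul_one := fun f => by rw [ShuffleAlgebra.mul_comm, ShuffleAlgebra.one_mul]
    zero_mul := ShuffleAlgebra.zero_mul
    mul_zero := fun f => by rw [ShuffleAlgebra.mul_comm, ShuffleAlgebra.zero_mul]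
    right_distrib := ShuffleAlgebra.add_mul
    left_distrib := fun f g h => by
      simp only [ShuffleAlgebra.mul_comm f, ShuffleAlgebra.add_mul] }

noncomputable instance : Algebra ℚ (ShuffleAlgebra X) :=
  Algebra.ofModule ShuffleAlgebra.smul_mul fun r f g => by
    rw [mul_comm, ShuffleAlgebra.smul_mul, mul_comm]

/-- The derivation of the shuffle algebra that removes a letter, the letter being inserted by
the injection `c`. -/
noncomputable def derivationOfInsert (c : List X → List X) (hc : Function.Injective c)
    (h : ∀ (f g : List X → ℚ) (w : List X), shuffleSeries f g (c w) =
      shuffleSeries (fun t => f (c t)) g w + shuffleSeries f (fun t => g (c t)) w) :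
    Derivation ℚ (ShuffleAlgebra X) (ShuffleAlgebra X) :=
  Derivation.mk' (Finsupp.lcomapDomain c hc : (List X →₀ ℚ) →ₗ[ℚ] (List X →₀ ℚ)) fun f g =>
    ext_of_coeff fun w => by
      simp only [smul_eq_mul, coeff_add, coeff_mul, shuffleSeries_comm g.coeff]
      rw [add_comm]
      refine Eq.trans ?_ (h f.coeff g.coeff w)
      exact mulSh_apply f g (c w)

theorem derivationOfInsert_iterate_eq_zero (c : List X → List X) (hc : Function.Injective c)
    (h : ∀ (f g : List X → ℚ) (w : List X), shuffleSeries f g (c w) =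
      shuffleSeries (fun t => f (c t)) g w + shuffleSeries f (fun t => g (c t)) w)
    (hlen : ∀ w, w.length < (c w).length) (f : ShuffleAlgebra X) :
    ∃ n : ℕ, (derivationOfInsert c hc h)^[n] f = 0 := by
  suffices H : ∀ (n : ℕ) (f : ShuffleAlgebra X), (∀ w, n ≤ w.length → f.coeff w = 0) →
      (derivationOfInsert c hc h)^[n] f = 0 by
    refine ⟨(Finsupp.support f).sup List.length + 1, H _ f fun w hw => ?_⟩
    by_contra hne
    have := Finset.le_sup (f := List.length) (Finsupp.mem_support_iff.2 hne)
    omega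
  intro n
  induction n with
  | zero => exact fun f hf => ext_of_coeff fun w => hf w (Nat.zero_le _)
  | succ n ih =>
    intro f hf
    exact ih _ fun w hw => hf (c w) (Nat.succ_le_of_lt (hw.trans_lt (hlen w)))

/-- Removal of the first letter `a`. -/
noncomputable def derivHead (a : X) : Derivation ℚ (ShuffleAlgebra X) (ShuffleAlgebra X) :=
  derivationOfInsert (fun w => a :: w) (List.cons_injective) fun _ _ _ => rfl

/-- Removal of the last letter `b`. -/
noncomputable def derivLast (b : X) : Derivation ℚ (ShuffleAlgebra X) (ShuffleAlgebra X) :=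
  derivationOfInsert (fun w => w ++ [b]) (List.append_left_injective [b]) fun f g w =>
    shuffleSeries_append_singleton f g w b

theorem coeff_derivHead (a : X) (f : ShuffleAlgebra X) (w : List X) :
    (derivHead a f).coeff w = f.coeff (a :: w) := rfl

theorem coeff_derivLast (b : X) (f : ShuffleAlgebra X) (w : List X) :
    (derivLast b f).coeff w = f.coeff (w ++ [b]) := rfl

theorem derivHead_derivLast (a b : X) (f : ShuffleAlgebra X) :
    derivHead a (derivLast b f) = derivLast b (derivHead a f) :=
  ext_of_coeff fun _ => rfl

/-- A word of length one. -/
noncomputable def letter (a : X) : ShuffleAlgebra X := (Finsupp.single [a] 1 : List X →₀ ℚ)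

theorem coeff_letter (a : X) (w : List X) : (letter a).coeff w = if [a] = w then 1 else 0 :=
  Finsupp.single_apply

theorem derivHead_letter_self (a : X) : derivHead a (letter a) = 1 :=
  ext_of_coeff fun w => by
    simp [coeff_derivHead, coeff_letter, coeff_one]

theorem derivLast_letter_self (b : X) : derivLast b (letter b) = 1 :=
  ext_of_coeff fun w => by
    cases w <;> simp [coeff_derivLast, coeff_letter, coeff_one]

theorem derivHead_letter_of_ne {a b : X} (h : b ≠ a) : derivHead a (letter b) = 0 :=
  ext_of_coeff fun w => by
    simp [coeff_derivHead, coeff_letter, coeff_zero, h]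

theorem mem_goodSpan_iff_deriv {a b : X} {f : ShuffleAlgebra X} :
    (show List X →₀ ℚ from f) ∈ goodSpan a b ↔ derivHead a f = 0 ∧ derivLast b f = 0 := by
  rw [mem_goodSpan_iff]
  refine and_congr ⟨fun h => ext_of_coeff h, fun h w => ?_⟩
    ⟨fun h => ext_of_coeff h, fun h w => ?_⟩
  · exact congrArg (fun g => g.coeff w) h
  · exact congrArg (fun g => g.coeff w) h

/-- A linear map that is multiplicative for the shuffle product, as an algebra morphism. -/
noncomputable def algHomOfMulSh {B : Type*} [CommRing B] [Algebra ℚ B]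
    (J : (List X →₀ ℚ) →ₗ[ℚ] B) (h1 : J (Finsupp.single [] 1) = 1)
    (hmul : ∀ f g, J (mulSh f g) = J f * J g) : ShuffleAlgebra X →ₐ[ℚ] B :=
  AlgHom.ofLinearMap (A := ShuffleAlgebra X) J h1 hmul

/-- Removal of the last letter `b`, on the elements without words beginning with `a`. -/
noncomputable abbrev derivLastConstants (a b : X) :
    Derivation ℚ (derivHead a).constants (derivHead a).constants :=
  Derivation.restrictConstants (derivHead a) (derivLast b) (derivHead_derivLast a b)

/-- The letter `b`, as an element without words beginning with `a`. -/
noncomputable def letterConstant {a b : X} (h : b ≠ a) : (derivHead a).constants :=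
  ⟨letter b, derivHead_letter_of_ne h⟩

theorem derivLastConstants_letterConstant {a b : X} (h : b ≠ a) :
    derivLastConstants a b (letterConstant h) = 1 :=
  Subtype.ext (derivLast_letter_self b)

theorem derivHead_iterate_eq_zero (a : X) (f : ShuffleAlgebra X) :
    ∃ n : ℕ, (derivHead a)^[n] f = 0 :=
  derivationOfInsert_iterate_eq_zero _ _ _ (by simp) f

theorem derivLastConstants_iterate_eq_zero (a b : X) (f : (derivHead a).constants) :
    ∃ n : ℕ, (derivLastConstants a b)^[n] f = 0 := by
  obtain ⟨n, hn⟩ : ∃ n : ℕ, (derivLast b)^[n] (f : ShuffleAlgebra X) = 0 :=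
    derivationOfInsert_iterate_eq_zero _ _ _ (by simp) _
  refine ⟨n, Subtype.ext ?_⟩
  have hs : Function.Semiconj ((↑) : (derivHead a).constants → ShuffleAlgebra X)
      (derivLastConstants a b) (derivLast b) :=
    Derivation.coe_restrictConstants _ _ _
  rw [(hs.iterate_right n).eq, hn]
  rfl

theorem coe_mem_goodSpan {a b : X} (f : (derivLastConstants a b).constants) :
    (show List X →₀ ℚ from ((f : (derivHead a).constants) : ShuffleAlgebra X)) ∈
      goodSpan a b :=
  mem_goodSpan_iff_deriv.2 ⟨f.1.2, congrArg Subtype.val f.2⟩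

/-- A linear map that is multiplicative on the convergent elements, as an algebra morphism. -/
noncomputable def algHomOfGoodSpan {B : Type*} [CommRing B] [Algebra ℚ B] {a b : X}
    (I : (List X →₀ ℚ) →ₗ[ℚ] B) (h1 : I (Finsupp.single [] 1) = 1)
    (hmul : ∀ f g, f ∈ goodSpan a b → g ∈ goodSpan a b → I (mulSh f g) = I f * I g) :
    (derivLastConstants a b).constants →ₐ[ℚ] B :=
  AlgHom.ofLinearMap
    ((show ShuffleAlgebra X →ₗ[ℚ] B from I) ∘ₗ (derivHead a).constants.val.toLinearMap ∘ₗ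
      (derivLastConstants a b).constants.val.toLinearMap) h1
    fun f g => hmul _ _ (coe_mem_goodSpan f) (coe_mem_goodSpan g)

end ShuffleAlgebra

end Words

/-- Let `C` be the subalgebra of the shuffle algebra `(A, ⧢)` spanned
by the words not beginning with `x₁` and not ending with `x₀`. Then `A ≅ C[x₀, x₁]` as
a commutative ℚ-algebra: for every commutative ℚ-algebra `B`, every algebra morphism
`I : C → B` and every choice of values `λ₀, λ₁ ∈ B`, there is a unique extension of `I`
to an algebra morphism `J : (A, ⧢) → B` with `J(x₀) = λ₀` and `J(x₁) = λ₁`. In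
particular (taking `B = ℂ`, `λ₀ = λ₁ = 0`), any ℚ-algebra morphism `I : C → ℂ` extends
uniquely to an algebra morphism `Ī : (A, ⧢) → ℂ` with `Ī(x₀) = Ī(x₁) = 0`. -/
theorem shuffle_polynomial_over_convergent {X : Type} [DecidableEq X] (x₀ x₁ : X)
    (hx : x₀ ≠ x₁) (B : Type) [CommRing B] [Algebra ℚ B]
    (I : (List X →₀ ℚ) →ₗ[ℚ] B)
    (hI1 : I (Finsupp.single [] 1) = 1)
    (hImul : ∀ f g : List X →₀ ℚ, f ∈ goodSpan x₁ x₀ → g ∈ goodSpan x₁ x₀ →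
      I (mulSh f g) = I f * I g)
    (lam₀ lam₁ : B) :
    ∃! J : (List X →₀ ℚ) →ₗ[ℚ] B,
      J (Finsupp.single [] 1) = 1 ∧
      (∀ f g : List X →₀ ℚ, J (mulSh f g) = J f * J g) ∧
      J (Finsupp.single [x₀] 1) = lam₀ ∧
      J (Finsupp.single [x₁] 1) = lam₁ ∧
      ∀ p ∈ goodSpan x₁ x₀, J p = I p := by
  have hs₁ := ShuffleAlgebra.derivHead_letter_self x₁
  have hs₀ := ShuffleAlgebra.derivLastConstants_letterConstant hx
  have hn₁ := ShuffleAlgebra.derivHead_iterate_eq_zero x₁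
  have hn₀ := ShuffleAlgebra.derivLastConstants_iterate_eq_zero x₁ x₀
  obtain ⟨φ, hφ₀, hφ⟩ := Derivation.exists_extension_of_slice _ hs₀ hn₀
    (ShuffleAlgebra.algHomOfGoodSpan I hI1 hImul) lam₀
  obtain ⟨ψ, hψ₁, hψ⟩ := Derivation.exists_extension_of_slice _ hs₁ hn₁ φ lam₁
  refine ⟨ψ.toLinearMap, ⟨map_one ψ, map_mul ψ, ?_, hψ₁, fun p hp => ?_⟩, ?_⟩
  · exact (hψ (ShuffleAlgebra.letterConstant hx)).trans hφ₀
  · obtain ⟨h₁, h₀⟩ := ShuffleAlgebra.mem_goodSpan_iff_deriv.1 hp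
    exact (hψ ⟨p, h₁⟩).trans (hφ ⟨⟨p, h₁⟩, Subtype.ext h₀⟩)
  · rintro J ⟨hJ1, hJmul, hJ₀, hJ₁, hJ⟩
    suffices h : ShuffleAlgebra.algHomOfMulSh J hJ1 hJmul = ψ from
      congrArg AlgHom.toLinearMap h
    refine Derivation.algHom_ext_of_slice _ hs₁ hn₁ (hJ₁.trans hψ₁.symm) fun p => ?_
    rw [hψ]
    refine DFunLike.congr_fun (Derivation.algHom_ext_of_slice
      (ψ := (ShuffleAlgebra.algHomOfMulSh J hJ1 hJmul).comp
        (ShuffleAlgebra.derivHead x₁).constants.val) _ hs₀ hn₀ (hJ₀.trans hφ₀.symm)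
      fun q => ?_) p
    rw [hφ]
    exact hJ _ (ShuffleAlgebra.coe_mem_goodSpan q)
end

section
/- Let k be a commutative ℚ-algebra and Γ a finite abelian group. For each series ψ ∈ k⟨⟨X_Γ⟩⟩ with zero constant term, let d_ψ be the continuous derivation of k⟨⟨X_Γ⟩⟩ determined by d_ψ(x₀) = 0 and d_ψ(x_σ) = [x_σ, t_σ(ψ)] for σ ∈ Γ, where t_σ is the algebra automorphism fixing x₀ and sending x_τ to x_{στ}. Define s_ψ(φ) = ψφ + d_ψ(φ). Then the assignment ψ ↦ s_ψ satisfies s_{⟨ψ₁,ψ₂⟩} = [s_{ψ₁}, s_{ψ₂}] where ⟨ψ₁,ψ₂⟩ := s_{ψ₁}(ψ₂) − s_{ψ₂}(ψ₁), and in particular ⟨·,·⟩ is a Lie bracket on series with zero constant term. -/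
/- Noncommutative formal power series over the alphabet X_Γ = {x₀} ∪ {x_σ : σ ∈ Γ},
modelled as coefficient functions `List (Option Γ) → k` (none = x₀, some σ = x_σ). -/

open Finset

/-- Noncommutative series: a coefficient for each word. -/
abbrev Ser (X k : Type) : Type := List X → k

/-- The finset of all words of length at most `L` over a finite alphabet. -/
def wordsLe (X : Type) [Fintype X] [DecidableEq X] (L : ℕ) : Finset (List X) :=
  (Finset.range (L + 1)).biUnion fun n =>
    (Fintype.piFinset fun _ : Fin n => (Finset.univ : Finset X)).image List.ofFn

/-- The unit series 1. -/
def sone {X k : Type} [CommRing k] : Ser X k := fun w =>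
  match w with
  | [] => 1
  | _ => 0

/-- Product of noncommutative series (Cauchy product over factorizations of a word). -/
def smul2 {X k : Type} [CommRing k] (F G : Ser X k) : Ser X k := fun w =>
  ∑ p ∈ Finset.range (w.length + 1), F (w.take p) * G (w.drop p)

/-- The series given by a single word with coefficient 1. -/
def monom {X k : Type} [CommRing k] [DecidableEq X] (v : List X) : Ser X k :=
  fun w => if w = v then 1 else 0

/-- The automorphism t_σ of `k⟨⟨X_Γ⟩⟩` fixing x₀ and sending x_τ to x_{στ},
acting on series. -/
def tser {Γ k : Type} [CommGroup Γ] [CommRing k] (σ : Γ) (F : Ser (Option Γ) k) :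
    Ser (Option Γ) k :=
  fun w => F (w.map (Option.map (fun τ => σ⁻¹ * τ)))

/-- The value of the special derivation d_ψ on the letters:
`d_ψ(x₀) = 0` and `d_ψ(x_σ) = [x_σ, t_σ(ψ)]`. -/
def dlet {Γ k : Type} [CommGroup Γ] [DecidableEq Γ] [CommRing k]
    (ψ : Ser (Option Γ) k) : Option Γ → Ser (Option Γ) k
  | none => fun _ => 0
  | some σ => fun w =>
      smul2 (monom [some σ]) (tser σ ψ) w - smul2 (tser σ ψ) (monom [some σ]) w

/-- The special derivation d_ψ evaluated on a single word. -/
def dword {Γ k : Type} [CommGroup Γ] [DecidableEq Γ] [CommRing k]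
    (ψ : Ser (Option Γ) k) (w : List (Option Γ)) : Ser (Option Γ) k := fun u =>
  ∑ i ∈ Finset.range w.length,
    smul2 (monom (w.take i)) (smul2 (dlet ψ (w.getD i none)) (monom (w.drop (i + 1)))) u

/-- The (Γ-equivariant) special derivation d_ψ of `k⟨⟨X_Γ⟩⟩`, with
`d_ψ(x₀) = 0` and `d_ψ(x_σ) = [x_σ, t_σ(ψ)]`, applied to a series. -/
def dser {Γ k : Type} [CommGroup Γ] [Fintype Γ] [DecidableEq Γ] [CommRing k]
    (ψ F : Ser (Option Γ) k) : Ser (Option Γ) k := fun u =>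
  ∑ w ∈ wordsLe (Option Γ) u.length, F w * dword ψ w u

/-- The tangential action operator `s_ψ(φ) = ψ·φ + d_ψ(φ)`. -/
def sact {Γ k : Type} [CommGroup Γ] [Fintype Γ] [DecidableEq Γ] [CommRing k]
    (ψ F : Ser (Option Γ) k) : Ser (Option Γ) k := fun u =>
  smul2 ψ F u + dser ψ F u

/-- The Ihara bracket `⟨ψ₁, ψ₂⟩ := s_{ψ₁}(ψ₂) − s_{ψ₂}(ψ₁)`. -/
def ibr {Γ k : Type} [CommGroup Γ] [Fintype Γ] [DecidableEq Γ] [CommRing k]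
    (ψ₁ ψ₂ : Ser (Option Γ) k) : Ser (Option Γ) k := fun u =>
  sact ψ₁ ψ₂ u - sact ψ₂ ψ₁ u

/-- Noncommutative series, with the product `smul2` as multiplication
(rather than the pointwise product that `Ser` inherits as a function type). -/
def NCSeries (X k : Type) : Type := Ser X k

namespace NCSeries

section Ring

variable {X k : Type}

@[ext] theorem ext {F G : NCSeries X k} (h : ∀ u, F u = G u) : F = G := funext h

/-- The series `F'` such that `x F'` is the part of `F` supported on words starting with `x`. -/
def tail (x : X) (F : NCSeries X k) : NCSeries X k := fun w => F (x :: w)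

theorem tail_apply (x : X) (F : NCSeries X k) (u : List X) : tail x F u = F (x :: u) := rfl

variable [CommRing k]

instance : AddCommGroup (NCSeries X k) := inferInstanceAs (AddCommGroup (List X → k))

instance : Module k (NCSeries X k) := inferInstanceAs (Module k (List X → k))

instance : One (NCSeries X k) := ⟨sone⟩

instance : Mul (NCSeries X k) := ⟨smul2⟩

@[simp] theorem add_apply (F G : NCSeries X k) (u : List X) : (F + G) u = F u + G u := rfl

@[simp] theorem sub_apply (F G : NCSeries X k) (u : List X) : (F - G) u = F u - G u := rfl

@[simp] theorem zero_apply (u : List X) : (0 : NCSeries X k) u = 0 := rfl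

@[simp] theorem smul_apply (c : k) (F : NCSeries X k) (u : List X) : (c • F) u = c * F u := rfl

theorem sum_apply {ι : Type} (s : Finset ι) (F : ι → NCSeries X k) (u : List X) :
    (∑ i ∈ s, F i) u = ∑ i ∈ s, F i u :=
  Finset.sum_apply u s (fun i => (F i : List X → k))

@[simp] theorem one_nil : (1 : NCSeries X k) [] = 1 := rfl

@[simp] theorem one_cons (x : X) (u : List X) : (1 : NCSeries X k) (x :: u) = 0 := rfl

theorem mul_apply (F G : NCSeries X k) (u : List X) :
    (F * G) u = ∑ p ∈ Finset.range (u.length + 1), F (u.take p) * G (u.drop p) := rfl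

@[simp] theorem tail_one (x : X) : tail x (1 : NCSeries X k) = 0 := rfl

@[simp] theorem mul_nil (F G : NCSeries X k) : (F * G) [] = F [] * G [] := by
  simp [mul_apply]

theorem mul_cons (F G : NCSeries X k) (x : X) (u : List X) :
    (F * G) (x :: u) = F [] * G (x :: u) + (tail x F * G) u := by
  simp only [mul_apply, List.length_cons]
  rw [Finset.sum_range_succ']
  simp [add_comm, tail_apply]

protected theorem zero_mul' (F : NCSeries X k) : 0 * F = 0 := by
  ext u; simp [mul_apply]

protected theorem mul_zero' (F : NCSeries X k) : F * 0 = 0 := by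
  ext u; simp [mul_apply]

protected theorem add_mul' (F G H : NCSeries X k) : (F + G) * H = F * H + G * H := by
  ext u; simp [mul_apply, add_mul, Finset.sum_add_distrib]

protected theorem mul_add' (F G H : NCSeries X k) : F * (G + H) = F * G + F * H := by
  ext u; simp [mul_apply, mul_add, Finset.sum_add_distrib]

protected theorem smul_mul' (c : k) (F G : NCSeries X k) : (c • F) * G = c • (F * G) := by
  ext u; simp [mul_apply, mul_assoc, Finset.mul_sum]

protected theorem mul_smul' (c : k) (F G : NCSeries X k) : F * (c • G) = c • (F * G) := by
  ext u; simp [mul_apply, mul_left_comm, Finset.mul_sum]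

theorem tail_mul (x : X) (F G : NCSeries X k) :
    tail x (F * G) = F [] • tail x G + tail x F * G := by
  ext u; exact mul_cons F G x u

protected theorem mul_assoc' (F G H : NCSeries X k) : F * G * H = F * (G * H) := by
  ext u
  induction u generalizing F G with
  | nil => simp [mul_assoc]
  | cons x u ih =>
    rw [mul_cons, mul_cons F, mul_cons G, tail_mul, NCSeries.add_mul', NCSeries.smul_mul',
      add_apply, ih, smul_apply, mul_nil]
    ring

protected theorem one_mul' (F : NCSeries X k) : 1 * F = F := by
  ext u
  cases u with
  | nil => simp
  | cons x u => simp [mul_cons, NCSeries.zero_mul']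

protected theorem mul_one' (F : NCSeries X k) : F * 1 = F := by
  ext u
  induction u generalizing F with
  | nil => simp
  | cons x u ih => simp [mul_cons, ih, tail_apply]

instance : Ring (NCSeries X k) where
  __ := instAddCommGroup
  __ := instMul
  __ := instOne
  left_distrib := NCSeries.mul_add'
  right_distrib := NCSeries.add_mul'
  zero_mul := NCSeries.zero_mul'
  mul_zero := NCSeries.mul_zero'
  mul_assoc := NCSeries.mul_assoc'
  one_mul := NCSeries.one_mul'
  mul_one := NCSeries.mul_one'

instance : Algebra k (NCSeries X k) :=
  Algebra.ofModule NCSeries.smul_mul' fun c F G => NCSeries.mul_smul' c F G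

end Ring

section Letter

variable {X k : Type} [CommRing k] [DecidableEq X]

/-- The series consisting of a single letter. -/
def letter (x : X) : NCSeries X k := monom [x]

/-- The series consisting of a single word. -/
def word (w : List X) : NCSeries X k := monom w

theorem word_apply (w u : List X) : (word w : NCSeries X k) u = if u = w then 1 else 0 := rfl

theorem letter_apply (x : X) (u : List X) :
    (letter x : NCSeries X k) u = if u = [x] then 1 else 0 := rfl

theorem word_nil : (word [] : NCSeries X k) = 1 := by
  ext u
  cases u <;> simp [word_apply]

@[simp] theorem letter_nil (x : X) : (letter x : NCSeries X k) [] = 0 := by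
  simp [letter_apply]

theorem tail_letter (x y : X) :
    tail y (letter x : NCSeries X k) = if y = x then 1 else 0 := by
  ext u
  cases u <;> by_cases h : y = x <;> simp [tail_apply, letter_apply, h]

theorem letter_mul_cons (x y : X) (F : NCSeries X k) (u : List X) :
    ((letter x : NCSeries X k) * F) (y :: u) = if y = x then F u else 0 := by
  rw [mul_cons, tail_letter]
  split_ifs <;> simp

theorem word_cons (x : X) (w : List X) :
    (word (x :: w) : NCSeries X k) = letter x * word w := by
  ext u
  cases u with
  | nil => simp [word_apply]
  | cons y u =>
    rw [letter_mul_cons]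
    by_cases h : y = x <;> simp [word_apply, h]

variable [Fintype X]

theorem eq_smul_one_add_sum (F : NCSeries X k) :
    F = F [] • 1 + ∑ x, letter x * tail x F := by
  ext u
  cases u with
  | nil => simp [sum_apply]
  | cons y u => simp [sum_apply, letter_mul_cons, tail_apply]

theorem mem_wordsLe {L : ℕ} {w : List X} : w ∈ wordsLe X L ↔ w.length ≤ L := by
  simp only [wordsLe, Finset.mem_biUnion, Finset.mem_range, Finset.mem_image,
    Fintype.mem_piFinset, Finset.mem_univ, implies_true, true_and]
  constructor
  · rintro ⟨n, hn, f, rfl⟩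
    simpa using Nat.lt_succ_iff.mp hn
  · intro h
    exact ⟨w.length, Nat.lt_succ_of_le h, w.get, List.ofFn_get w⟩

theorem sum_wordsLe_succ (L : ℕ) (f : List X → k) :
    ∑ w ∈ wordsLe X (L + 1), f w = f [] + ∑ x, ∑ w ∈ wordsLe X L, f (x :: w) := by
  have h : wordsLe X (L + 1) = insert []
      ((Finset.univ ×ˢ wordsLe X L).image fun p : X × List X => p.1 :: p.2) := by
    ext w
    cases w <;> simp [mem_wordsLe]
  rw [h, Finset.sum_insert (by simp), Finset.sum_image, Finset.sum_product]
  rintro ⟨x, w⟩ - ⟨y, v⟩ - h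
  simpa using h

/-- Coefficients of a product through the expansion of the right factor into words. -/
theorem mul_apply_eq_sum_word (F G : NCSeries X k) (u : List X) {L : ℕ} (hL : u.length ≤ L) :
    (F * G) u = ∑ w ∈ wordsLe X L, G w * (F * (word w : NCSeries X k)) u := by
  simp only [mul_apply, word_apply, Finset.mul_sum]
  rw [Finset.sum_comm]
  refine Finset.sum_congr rfl fun p _ => ?_
  have hp : u.drop p ∈ wordsLe X L := mem_wordsLe.2 (by simp; omega)
  simp [hp, mul_comm]

end Letter

section Derivation

variable {X k : Type} [CommRing k]

/-- The Leibniz rule for a linear endomorphism of the series algebra. -/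
def IsDerivation (E : NCSeries X k →ₗ[k] NCSeries X k) : Prop :=
  ∀ F G, E (F * G) = E F * G + F * E G

theorem IsDerivation.map_one {E : NCSeries X k →ₗ[k] NCSeries X k} (hE : IsDerivation E) :
    E 1 = 0 := by
  simpa using hE 1 1

theorem IsDerivation.sub {E E' : NCSeries X k →ₗ[k] NCSeries X k} (hE : IsDerivation E)
    (hE' : IsDerivation E') : IsDerivation (E - E') := fun F G => by
  simp only [LinearMap.sub_apply, hE F G, hE' F G]
  noncomm_ring

theorem IsDerivation.commutator {E E' : NCSeries X k →ₗ[k] NCSeries X k} (hE : IsDerivation E)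
    (hE' : IsDerivation E') : IsDerivation (E ∘ₗ E' - E' ∘ₗ E) := fun F G => by
  simp only [LinearMap.sub_apply, LinearMap.comp_apply, hE F G, hE' F G, map_add, hE _ _, hE' _ _]
  noncomm_ring

variable [DecidableEq X] [Fintype X]

theorem IsDerivation.eq_zero {E : NCSeries X k →ₗ[k] NCSeries X k} (hE : IsDerivation E)
    (h : ∀ x, E (letter x) = 0) : E = 0 := by
  have key (F : NCSeries X k) : E F = ∑ x, letter x * E (tail x F) := by
    conv_lhs => rw [eq_smul_one_add_sum F]
    simp [hE.map_one, hE _ _, h]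
  ext F u
  induction u generalizing F with
  | nil => rw [key]; simp [sum_apply]
  | cons y u ih =>
    rw [key]
    simpa [sum_apply, letter_mul_cons] using ih (tail y F)

theorem IsDerivation.ext_letter {E E' : NCSeries X k →ₗ[k] NCSeries X k} (hE : IsDerivation E)
    (hE' : IsDerivation E') (h : ∀ x, E (letter x) = E' (letter x)) : E = E' :=
  sub_eq_zero.1 <| (hE.sub hE').eq_zero fun x => by simp [h]

end Derivation

section Translation

variable {Γ k : Type} [CommGroup Γ] [CommRing k]

/-- The action `t_σ` as a linear map. -/
def translate (σ : Γ) : NCSeries (Option Γ) k →ₗ[k] NCSeries (Option Γ) k where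
  toFun F := tser σ F
  map_add' _ _ := rfl
  map_smul' _ _ := rfl

theorem translate_apply (σ : Γ) (F : NCSeries (Option Γ) k) (u : List (Option Γ)) :
    translate σ F u = F (u.map (Option.map (fun τ => σ⁻¹ * τ))) := rfl

theorem translate_mul (σ : Γ) (F G : NCSeries (Option Γ) k) :
    translate σ (F * G) = translate σ F * translate σ G := by
  ext u
  simp [translate_apply, mul_apply, List.map_take, List.map_drop]

theorem translate_translate (σ τ : Γ) (F : NCSeries (Option Γ) k) :
    translate σ (translate τ F) = translate (σ * τ) F := by
  ext u
  simp only [translate_apply, List.map_map]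
  congr 2
  funext o
  cases o <;> simp [mul_assoc]

theorem translate_one (F : NCSeries (Option Γ) k) : translate (1 : Γ) F = F := by
  ext u
  simp only [translate_apply]
  congr 1
  conv_rhs => rw [← List.map_id u]
  congr 1
  funext o
  cases o <;> simp

theorem IsDerivation.conj_translate {E : NCSeries (Option Γ) k →ₗ[k] NCSeries (Option Γ) k}
    (hE : IsDerivation E) (σ : Γ) :
    IsDerivation (translate σ ∘ₗ E ∘ₗ translate σ⁻¹) := fun F G => by
  simp [translate_mul, hE _ _, translate_translate, translate_one]

variable [DecidableEq Γ]

theorem translate_letter (σ : Γ) (x : Option Γ) :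
    translate σ (letter x : NCSeries (Option Γ) k) = letter (x.map (σ * ·)) := by
  ext u
  simp only [translate_apply, letter_apply]
  congr 1
  rcases u with _ | ⟨a, _ | ⟨b, u⟩⟩
  · simp
  · cases a <;> cases x <;> simp [inv_mul_eq_iff_eq_mul]
  · simp

end Translation

section Special

variable {Γ k : Type} [CommGroup Γ] [DecidableEq Γ] [CommRing k]

/-- The value of `d_ψ` on a letter, as a noncommutative series. -/
def specialLetter (ψ : NCSeries (Option Γ) k) (x : Option Γ) : NCSeries (Option Γ) k :=
  dlet ψ x

theorem specialLetter_none (ψ : NCSeries (Option Γ) k) : specialLetter ψ none = 0 := rfl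

theorem specialLetter_some (ψ : NCSeries (Option Γ) k) (σ : Γ) :
    specialLetter ψ (some σ) =
      letter (some σ) * translate σ ψ - translate σ ψ * letter (some σ) := rfl

theorem specialLetter_nil (ψ : NCSeries (Option Γ) k) (x : Option Γ) :
    specialLetter ψ x [] = 0 := by
  cases x <;> simp [specialLetter_none, specialLetter_some]

/-- The value of `d_ψ` on a word, as a noncommutative series. -/
def specialWord (ψ : NCSeries (Option Γ) k) (w : List (Option Γ)) : NCSeries (Option Γ) k :=
  dword ψ w

theorem specialWord_eq_sum (ψ : NCSeries (Option Γ) k) (w : List (Option Γ)) :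
    specialWord ψ w = ∑ i ∈ Finset.range w.length,
      word (w.take i) * (specialLetter ψ (w.getD i none) * word (w.drop (i + 1))) := by
  ext u
  rw [sum_apply]
  rfl

theorem specialWord_nil (ψ : NCSeries (Option Γ) k) : specialWord ψ [] = 0 := rfl

theorem specialWord_cons (ψ : NCSeries (Option Γ) k) (x : Option Γ) (w : List (Option Γ)) :
    specialWord ψ (x :: w) = specialLetter ψ x * word w + letter x * specialWord ψ w := by
  rw [specialWord_eq_sum, List.length_cons, Finset.sum_range_succ', specialWord_eq_sum,
    Finset.mul_sum, add_comm]
  simp [word_nil, word_cons, mul_assoc]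

variable [Fintype Γ]

/-- The special derivation `d_ψ` as a linear map. -/
def special (ψ : NCSeries (Option Γ) k) : NCSeries (Option Γ) k →ₗ[k] NCSeries (Option Γ) k where
  toFun F := dser ψ F
  map_add' F G := by
    ext u
    exact (Finset.sum_congr rfl fun w _ => add_mul (F w) (G w) _).trans Finset.sum_add_distrib
  map_smul' c F := by
    ext u
    exact (Finset.sum_congr rfl fun w _ => mul_assoc c (F w) _).trans (Finset.mul_sum _ _ _).symm

theorem special_apply (ψ F : NCSeries (Option Γ) k) (u : List (Option Γ)) :
    special ψ F u = ∑ w ∈ wordsLe (Option Γ) u.length, F w * specialWord ψ w u := rfl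

theorem special_eq_sum (ψ F : NCSeries (Option Γ) k) :
    special ψ F = ∑ x, (specialLetter ψ x * tail x F + letter x * special ψ (tail x F)) := by
  ext u
  rw [special_apply, sum_apply]
  cases u with
  | nil =>
    have h : wordsLe (Option Γ) 0 = {[]} := by ext w; simp [mem_wordsLe]
    simp [h, specialWord_nil, specialLetter_nil]
  | cons y u =>
    rw [List.length_cons, sum_wordsLe_succ, specialWord_nil, zero_apply, mul_zero, zero_add]
    refine Finset.sum_congr rfl fun x _ => ?_
    simp only [specialWord_cons, add_apply, mul_add, Finset.sum_add_distrib]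
    congr 1
    · rw [mul_cons, specialLetter_nil, zero_mul, zero_add,
        mul_apply_eq_sum_word _ _ _ le_rfl]
      refine Finset.sum_congr rfl fun w _ => ?_
      rw [mul_cons, specialLetter_nil, zero_mul, zero_add, tail_apply]
    · simp only [letter_mul_cons]
      split_ifs
      · rfl
      · simp

theorem special_one (ψ : NCSeries (Option Γ) k) : special ψ 1 = 0 := by
  rw [special_eq_sum]; simp

theorem special_letter (ψ : NCSeries (Option Γ) k) (x : Option Γ) :
    special ψ (letter x) = specialLetter ψ x := by
  rw [special_eq_sum, Finset.sum_eq_single x]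
  · simp [tail_letter, special_one]
  · intro y _ hy
    simp [tail_letter, hy]
  · simp

theorem isDerivation_special (ψ : NCSeries (Option Γ) k) : IsDerivation (special ψ) := by
  have key (F G : NCSeries (Option Γ) k) :
      special ψ (F * G) - special ψ F * G - F * special ψ G =
        ∑ x, letter x * (special ψ (tail x F * G) - special ψ (tail x F) * G
          - tail x F * special ψ G) := by
    have h₁ : special ψ (F * G) = F [] • special ψ G +
        ∑ x, (specialLetter ψ x * (tail x F * G) + letter x * special ψ (tail x F * G)) := by
      rw [special_eq_sum ψ (F * G), special_eq_sum ψ G, Finset.smul_sum,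
        ← Finset.sum_add_distrib]
      refine Finset.sum_congr rfl fun x _ => ?_
      simp only [tail_mul, map_add, map_smul, mul_add, mul_smul_comm, smul_add]
      abel
    have h₂ : F * special ψ G = F [] • special ψ G +
        ∑ x, letter x * (tail x F * special ψ G) := by
      conv_lhs => rw [eq_smul_one_add_sum F]
      simp [add_mul, Finset.sum_mul, mul_assoc]
    rw [h₁, h₂, special_eq_sum ψ F, Finset.sum_mul]
    simp only [mul_sub, add_mul, mul_assoc, Finset.sum_add_distrib, Finset.sum_sub_distrib]
    abel
  intro F G
  suffices h : special ψ (F * G) - special ψ F * G - F * special ψ G = 0 by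
    rwa [sub_sub, sub_eq_zero] at h
  ext u
  induction u generalizing F with
  | nil => rw [key]; simp [sum_apply]
  | cons y u ih =>
    rw [key]
    simpa only [sum_apply, letter_mul_cons, Finset.sum_ite_eq, Finset.mem_univ, if_true,
      zero_apply]
      using ih (tail y F)

theorem translate_special (σ : Γ) (ψ F : NCSeries (Option Γ) k) :
    translate σ (special ψ F) = special ψ (translate σ F) := by
  have h : translate σ ∘ₗ special ψ ∘ₗ translate σ⁻¹ = special ψ := by
    refine ((isDerivation_special ψ).conj_translate σ).ext_letter (isDerivation_special ψ) ?_
    rintro (_ | τ)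
    · simp [translate_letter, special_letter, specialLetter_none]
    · simp [translate_letter, special_letter, specialLetter_some, translate_mul,
        translate_translate]
  have key := LinearMap.congr_fun h (translate σ F)
  simpa [translate_translate, translate_one] using key

/-- The operator `s_ψ` as a linear map. -/
def tangential (ψ : NCSeries (Option Γ) k) :
    NCSeries (Option Γ) k →ₗ[k] NCSeries (Option Γ) k :=
  LinearMap.mulLeft k ψ + special ψ

theorem tangential_apply (ψ F : NCSeries (Option Γ) k) :
    tangential ψ F = ψ * F + special ψ F := rfl

/-- The Ihara bracket on noncommutative series. -/
def ihara (ψ₁ ψ₂ : NCSeries (Option Γ) k) : NCSeries (Option Γ) k :=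
  tangential ψ₁ ψ₂ - tangential ψ₂ ψ₁

theorem special_ihara (ψ₁ ψ₂ : NCSeries (Option Γ) k) :
    special (ihara ψ₁ ψ₂) = special ψ₁ ∘ₗ special ψ₂ - special ψ₂ ∘ₗ special ψ₁ := by
  refine (isDerivation_special _).ext_letter
    ((isDerivation_special ψ₁).commutator (isDerivation_special ψ₂)) ?_
  rintro (_ | σ)
  · simp [special_letter, specialLetter_none]
  · simp only [LinearMap.sub_apply, LinearMap.comp_apply, special_letter, specialLetter_some,
      map_sub, isDerivation_special _ _ _, ← translate_special, ihara, tangential_apply, map_add,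
      translate_mul]
    noncomm_ring

theorem tangential_ihara (ψ₁ ψ₂ F : NCSeries (Option Γ) k) :
    tangential (ihara ψ₁ ψ₂) F =
      tangential ψ₁ (tangential ψ₂ F) - tangential ψ₂ (tangential ψ₁ F) := by
  rw [tangential_apply, special_ihara]
  simp only [ihara, tangential_apply, LinearMap.sub_apply, LinearMap.comp_apply, map_add,
    isDerivation_special _ _ _]
  noncomm_ring

theorem ihara_jacobi (ψ₁ ψ₂ ψ₃ : NCSeries (Option Γ) k) :
    ihara ψ₁ (ihara ψ₂ ψ₃) + ihara ψ₂ (ihara ψ₃ ψ₁) + ihara ψ₃ (ihara ψ₁ ψ₂) = 0 := by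
  have h (φ₁ φ₂ φ₃ : NCSeries (Option Γ) k) : ihara φ₁ (ihara φ₂ φ₃) =
      tangential φ₁ (tangential φ₂ φ₃) - tangential φ₁ (tangential φ₃ φ₂)
        - (tangential φ₂ (tangential φ₃ φ₁) - tangential φ₃ (tangential φ₂ φ₁)) := by
    rw [ihara, tangential_ihara, ihara, map_sub]
  simp only [h]
  abel

theorem special_nil (ψ F : NCSeries (Option Γ) k) : special ψ F [] = 0 := by
  rw [special_eq_sum]
  simp [sum_apply, specialLetter_nil]

theorem ihara_nil (ψ₁ ψ₂ : NCSeries (Option Γ) k) : ihara ψ₁ ψ₂ [] = 0 := by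
  simp [ihara, tangential_apply, special_nil, mul_comm]

end Special

end NCSeries

/-- The map `ψ ↦ s_ψ` satisfies `s_{⟨ψ₁,ψ₂⟩} = [s_{ψ₁}, s_{ψ₂}]` on
series with zero constant term; in particular `⟨·,·⟩` is a Lie bracket on the set of
series with zero constant term (alternating and satisfying the Jacobi identity). -/
theorem sact_bracket {Γ k : Type} [CommGroup Γ] [Fintype Γ] [DecidableEq Γ] [CommRing k] :
    (∀ ψ₁ ψ₂ : Ser (Option Γ) k, ψ₁ [] = 0 → ψ₂ [] = 0 →
      ∀ F : Ser (Option Γ) k, sact (ibr ψ₁ ψ₂) F =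
        fun u => sact ψ₁ (sact ψ₂ F) u - sact ψ₂ (sact ψ₁ F) u) ∧
    (∀ ψ : Ser (Option Γ) k, ψ [] = 0 → ibr ψ ψ = 0) ∧
    (∀ ψ₁ ψ₂ : Ser (Option Γ) k, ψ₁ [] = 0 → ψ₂ [] = 0 → ibr ψ₁ ψ₂ [] = 0) ∧
    (∀ ψ₁ ψ₂ ψ₃ : Ser (Option Γ) k, ψ₁ [] = 0 → ψ₂ [] = 0 → ψ₃ [] = 0 →
      ∀ u, ibr ψ₁ (ibr ψ₂ ψ₃) u + ibr ψ₂ (ibr ψ₃ ψ₁) u + ibr ψ₃ (ibr ψ₁ ψ₂) u = 0) := by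
  exact ⟨fun ψ₁ ψ₂ _ _ F => NCSeries.tangential_ihara ψ₁ ψ₂ F,
    fun ψ _ => sub_self (NCSeries.tangential ψ ψ),
    fun ψ₁ ψ₂ _ _ => NCSeries.ihara_nil ψ₁ ψ₂,
    fun ψ₁ ψ₂ ψ₃ _ _ _ u => congrFun (NCSeries.ihara_jacobi ψ₁ ψ₂ ψ₃) u⟩
end

section
/- Iterated integrals satisfy the shuffle relation: for convergent words u, v over X_Γ, I(u)·I(v) = I(u ⧢ v), where ⧢ is the shuffle product extended linearly and I is extended linearly to linear combinations of words. -/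
/-- The differential forms: `ω₀ = dt/t` for the letter `x₀` (encoded `none`) and
`ω_σ = σ dt/(1 − σt)` for the letter `x_σ` (encoded `some σ`). -/
noncomputable def omegaForm : Option ℂ → ℝ → ℂ
  | none => fun t => 1 / (t : ℂ)
  | some σ => fun t => σ / (1 - σ * (t : ℂ))

/-- The iterated integral `∫_{0 ≤ t_r ≤ ⋯ ≤ t₁ ≤ t} ⋀ ω_{ε_i}(t_i)` attached to a word,
defined recursively. -/
noncomputable def iterInt : List (Option ℂ) → ℝ → ℂ
  | [], _ => 1
  | e :: w, t => ∫ s in (0 : ℝ)..t, omegaForm e s * iterInt w s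

open MeasureTheory Set

/-! ### Analytic estimates -/

/-- Words whose letters are `x₀` or `x_σ` with `‖σ‖ = 1`, and whose last letter is not `x₀`. -/
def Admissible : List (Option ℂ) → Prop
  | [] => True
  | e :: w => (∀ z, e = some z → ‖z‖ = 1) ∧ (w = [] → e ≠ none) ∧ Admissible w

theorem one_sub_mul_ofReal_ne_zero {σ : ℂ} (hσ : ‖σ‖ = 1) {s : ℝ} (hs₀ : 0 ≤ s)
    (hs : s < 1 ∨ s = 1 ∧ σ ≠ 1) : 1 - σ * (s : ℂ) ≠ 0 := by
  intro h
  rcases hs with hs | ⟨rfl, hσ₁⟩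
  · have h' := congrArg norm (sub_eq_zero.mp h)
    rw [norm_mul, hσ, Complex.norm_real, Real.norm_of_nonneg hs₀, norm_one] at h'
    linarith
  · apply hσ₁
    simpa using (sub_eq_zero.mp h).symm

theorem norm_omegaForm_some_le {σ : ℂ} (hσ : ‖σ‖ = 1) {s : ℝ} (hs : s ∈ Ioo (0 : ℝ) 1) :
    ‖omegaForm (some σ) s‖ ≤ 1 / (1 - s) := by
  have h : 1 - s ≤ ‖1 - σ * (s : ℂ)‖ := by
    have h' := norm_sub_norm_le (1 : ℂ) (σ * (s : ℂ))
    rwa [norm_mul, hσ, Complex.norm_real, Real.norm_of_nonneg hs.1.le, norm_one, one_mul] at h'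
  rw [omegaForm, norm_div, hσ]
  exact one_div_le_one_div_of_le (by linarith [hs.2]) h

theorem exists_norm_omegaForm_some_le {σ : ℂ} (hσ : ‖σ‖ = 1) (hσ₁ : σ ≠ 1) :
    ∃ K, ∀ s ∈ Icc (0 : ℝ) 1, ‖omegaForm (some σ) s‖ ≤ K := by
  refine isCompact_Icc.exists_bound_of_continuousOn ?_
  refine ContinuousOn.div (by fun_prop) (by fun_prop) fun s hs => ?_
  exact one_sub_mul_ofReal_ne_zero hσ hs.1 (hs.2.lt_or_eq.imp id fun h => ⟨h, hσ₁⟩)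

theorem continuousOn_omegaForm {e : Option ℂ} (he : ∀ z, e = some z → ‖z‖ = 1) :
    ContinuousOn (omegaForm e) (Ioo 0 1) := by
  cases e with
  | none =>
    refine ContinuousOn.div (by fun_prop) (by fun_prop) fun s hs => ?_
    exact_mod_cast hs.1.ne'
  | some σ =>
    refine ContinuousOn.div (by fun_prop) (by fun_prop) fun s hs => ?_
    exact one_sub_mul_ofReal_ne_zero (he σ rfl) hs.1.le (Or.inl hs.2)

theorem intervalIntegrable_of_norm_le {g : ℝ → ℂ} {h : ℝ → ℝ} {T : ℝ} (hT₀ : 0 ≤ T) (hT₁ : T ≤ 1)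
    (hg : ContinuousOn g (Ioo 0 1)) (hh : IntervalIntegrable h volume 0 T)
    (hgh : ∀ s ∈ Ioo (0 : ℝ) T, ‖g s‖ ≤ h s) : IntervalIntegrable g volume 0 T := by
  rw [intervalIntegrable_iff_integrableOn_Ioo_of_le hT₀] at hh ⊢
  refine Integrable.mono' hh ((hg.mono (Ioo_subset_Ioo_right hT₁)).aestronglyMeasurable
    measurableSet_Ioo) ?_
  exact (ae_restrict_iff' measurableSet_Ioo).2 (ae_of_all _ hgh)

theorem intervalIntegrable_div_sqrt_one_sub (C : ℝ) {T : ℝ} (hT₀ : 0 ≤ T) (hT₁ : T ≤ 1) :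
    IntervalIntegrable (fun s : ℝ => C / √(1 - s)) volume 0 T := by
  have h := ((intervalIntegral.intervalIntegrable_rpow' (a := 1) (b := 1 - T)
    (r := -(1 / 2)) (by norm_num)).comp_sub_left 1).const_mul C
  rw [sub_self, sub_sub_cancel] at h
  refine h.congr_uIoo fun s hs => ?_
  rw [uIoo_of_le hT₀] at hs
  have hs' : 0 ≤ 1 - s := by linarith [hs.2]
  simp only [Real.rpow_neg hs', Real.sqrt_eq_rpow, div_eq_mul_inv]

theorem continuousOn_div_one_sub_mul_sqrt (C : ℝ) {T : ℝ} (hT : T < 1) :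
    ContinuousOn (fun s : ℝ => C / ((1 - s) * √(1 - s))) (Iic T) := by
  refine ContinuousOn.div (by fun_prop) (by fun_prop) fun s hs => ?_
  have : 0 < 1 - s := by linarith [mem_Iic.mp hs]
  positivity

theorem intervalIntegrable_div_one_sub_mul_sqrt (C : ℝ) {T : ℝ} (hT₀ : 0 ≤ T) (hT : T < 1) :
    IntervalIntegrable (fun s : ℝ => C / ((1 - s) * √(1 - s))) volume 0 T := by
  refine ((continuousOn_div_one_sub_mul_sqrt C hT).mono ?_).intervalIntegrable
  rw [uIcc_of_le hT₀]
  exact Icc_subset_Iic_self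

theorem integral_div_one_sub_mul_sqrt_le {C : ℝ} (hC : 0 ≤ C) {t : ℝ} (ht₀ : 0 ≤ t) (ht : t < 1) :
    ∫ s in (0 : ℝ)..t, C / ((1 - s) * √(1 - s)) ≤ 2 * C * t / √(1 - t) := by
  have hderiv : ∀ s ∈ uIcc 0 t,
      HasDerivAt (fun s : ℝ => 2 * C / √(1 - s)) (C / ((1 - s) * √(1 - s))) s := by
    intro s hs
    rw [uIcc_of_le ht₀] at hs
    have hs' : 0 < 1 - s := by linarith [hs.2]
    have hq : √(1 - s) ≠ 0 := (Real.sqrt_pos.2 hs').ne'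
    have h := (((hasDerivAt_id s).const_sub 1).sqrt hs'.ne').fun_inv hq |>.const_mul (2 * C)
    refine h.congr_deriv ?_
    simp only [id]
    rw [Real.sq_sqrt hs'.le]
    field_simp
  rw [intervalIntegral.integral_eq_sub_of_hasDerivAt hderiv
    (intervalIntegrable_div_one_sub_mul_sqrt C ht₀ ht)]
  have hpos : 0 < √(1 - t) := Real.sqrt_pos.2 (by linarith)
  have hle : √(1 - t) ≤ 1 := Real.sqrt_le_one.2 (by linarith)
  have hsq : √(1 - t) ^ 2 = 1 - t := Real.sq_sqrt (by linarith)
  rw [sub_zero, Real.sqrt_one, div_one, sub_le_iff_le_add, div_add' _ _ _ hpos.ne']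
  gcongr
  nlinarith [mul_nonneg hC (mul_nonneg hpos.le (sub_nonneg.2 hle))]

/-- The growth bound satisfied by the iterated integrals of admissible words. -/
def GrowthBound (w : List (Option ℂ)) : Prop :=
  ContinuousOn (iterInt w) (Ico 0 1) ∧ ∃ C, 0 ≤ C ∧ ∀ t ∈ Ico (0 : ℝ) 1,
    ‖iterInt w t‖ ≤ C / √(1 - t) ∧ (w ≠ [] → ‖iterInt w t‖ ≤ C * t / √(1 - t))

theorem GrowthBound.nil : GrowthBound [] := by
  refine ⟨by simpa only [iterInt] using continuousOn_const, 1, zero_le_one,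
    fun t ht => ⟨?_, by simp⟩⟩
  rw [iterInt, norm_one, le_div_iff₀ (Real.sqrt_pos.2 (by linarith [ht.2])), one_mul]
  exact Real.sqrt_le_one.2 (by linarith [ht.1])

section Integrand

variable {e : Option ℂ} {w : List (Option ℂ)}

theorem GrowthBound.continuousOn_integrand (hw : GrowthBound w) (he : ∀ z, e = some z → ‖z‖ = 1) :
    ContinuousOn (fun s => omegaForm e s * iterInt w s) (Ioo 0 1) :=
  (continuousOn_omegaForm he).mul (hw.1.mono Ioo_subset_Ico_self)

theorem GrowthBound.exists_norm_integrand_le_of_ne (hw : GrowthBound w)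
    (hew : Admissible (e :: w)) (he : e ≠ some 1) :
    ∃ C, ∀ s ∈ Ioo (0 : ℝ) 1, ‖omegaForm e s * iterInt w s‖ ≤ C / √(1 - s) := by
  obtain ⟨-, C, hC, hbound⟩ := hw
  cases e with
  | none =>
    refine ⟨C, fun s hs => ?_⟩
    have h := (hbound s ⟨hs.1.le, hs.2⟩).2 fun h => hew.2.1 h rfl
    rw [omegaForm, norm_mul, norm_div, norm_one, Complex.norm_real, Real.norm_of_nonneg hs.1.le]
    calc 1 / s * ‖iterInt w s‖ ≤ 1 / s * (C * s / √(1 - s)) := by have := hs.1; gcongr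
      _ = C / √(1 - s) := by have := hs.1.ne'; field_simp
  | some σ =>
    obtain ⟨K, hK⟩ := exists_norm_omegaForm_some_le (hew.1 σ rfl) fun h => he (h ▸ rfl)
    refine ⟨K * C, fun s hs => ?_⟩
    rw [norm_mul, mul_div_assoc]
    have hK' := hK s (Ioo_subset_Icc_self hs)
    exact mul_le_mul hK' (hbound s ⟨hs.1.le, hs.2⟩).1 (norm_nonneg _)
      ((norm_nonneg _).trans hK')

theorem GrowthBound.exists_norm_integrand_le (hw : GrowthBound w) (hew : Admissible (e :: w)) :
    ∃ C, 0 ≤ C ∧ ∀ s ∈ Ioo (0 : ℝ) 1,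
      ‖omegaForm e s * iterInt w s‖ ≤ C / ((1 - s) * √(1 - s)) := by
  by_cases he : e = some 1
  · subst he
    obtain ⟨-, C, hC, hbound⟩ := hw
    refine ⟨C, hC, fun s hs => ?_⟩
    have h₁ := (hbound s ⟨hs.1.le, hs.2⟩).1
    have h₂ := norm_omegaForm_some_le (hew.1 1 rfl) hs
    have hs' : 0 < 1 - s := by linarith [hs.2]
    calc ‖omegaForm (some 1) s * iterInt w s‖ ≤ 1 / (1 - s) * (C / √(1 - s)) := by
          rw [norm_mul]; gcongr
      _ = C / ((1 - s) * √(1 - s)) := by rw [div_mul_div_comm, one_mul]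
  · obtain ⟨C, hC⟩ := hw.exists_norm_integrand_le_of_ne hew he
    refine ⟨|C|, abs_nonneg C, fun s hs => (hC s hs).trans ?_⟩
    have hs' : 0 < 1 - s := by linarith [hs.2]
    have hq : 0 < √(1 - s) := Real.sqrt_pos.2 hs'
    gcongr
    · exact le_abs_self C
    · nlinarith [hs.1]

theorem GrowthBound.intervalIntegrable_integrand (hw : GrowthBound w) (hew : Admissible (e :: w))
    {T : ℝ} (hT₀ : 0 ≤ T) (hT₁ : T ≤ 1) (hT : T < 1 ∨ e ≠ some 1) :
    IntervalIntegrable (fun s => omegaForm e s * iterInt w s) volume 0 T := by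
  rcases hT with hT | he
  · obtain ⟨C, -, hC⟩ := hw.exists_norm_integrand_le hew
    exact intervalIntegrable_of_norm_le hT₀ hT₁ (hw.continuousOn_integrand hew.1)
      (intervalIntegrable_div_one_sub_mul_sqrt C hT₀ hT)
      fun s hs => hC s (Ioo_subset_Ioo_right hT₁ hs)
  · obtain ⟨C, hC⟩ := hw.exists_norm_integrand_le_of_ne hew he
    exact intervalIntegrable_of_norm_le hT₀ hT₁ (hw.continuousOn_integrand hew.1)
      (intervalIntegrable_div_sqrt_one_sub C hT₀ hT₁)
      fun s hs => hC s (Ioo_subset_Ioo_right hT₁ hs)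

theorem GrowthBound.hasDerivAt_cons (hw : GrowthBound w) (hew : Admissible (e :: w))
    {t : ℝ} (ht : t ∈ Ioo (0 : ℝ) 1) :
    HasDerivAt (iterInt (e :: w)) (omegaForm e t * iterInt w t) t := by
  have hcont := hw.continuousOn_integrand hew.1
  have hnhds : Ioo (0 : ℝ) 1 ∈ nhds t := isOpen_Ioo.mem_nhds ht
  exact intervalIntegral.integral_hasDerivAt_right
    (hw.intervalIntegrable_integrand hew ht.1.le ht.2.le (Or.inl ht.2))
    (hcont.stronglyMeasurableAtFilter isOpen_Ioo t ht) (hcont.continuousAt hnhds)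

theorem GrowthBound.continuousOn_cons (hw : GrowthBound w) (hew : Admissible (e :: w))
    {T : ℝ} (hT₀ : 0 ≤ T) (hT₁ : T ≤ 1) (hT : T < 1 ∨ e ≠ some 1) :
    ContinuousOn (iterInt (e :: w)) (uIcc 0 T) :=
  intervalIntegral.continuousOn_primitive_interval'
    (hw.intervalIntegrable_integrand hew hT₀ hT₁ hT) left_mem_uIcc

theorem GrowthBound.cons (hw : GrowthBound w) (hew : Admissible (e :: w)) :
    GrowthBound (e :: w) := by
  have hcont : ContinuousOn (iterInt (e :: w)) (Ico 0 1) := by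
    intro t ht
    obtain ⟨T, htT, hT⟩ := exists_between ht.2
    have hT₀ : 0 ≤ T := ht.1.trans htT.le
    have h := hw.continuousOn_cons hew hT₀ hT.le (Or.inl hT)
    rw [uIcc_of_le hT₀] at h
    refine (h t ⟨ht.1, htT.le⟩).mono_of_mem_nhdsWithin ?_
    filter_upwards [self_mem_nhdsWithin, mem_nhdsWithin_of_mem_nhds (Iio_mem_nhds htT)]
      with s hs hs' using ⟨hs.1, le_of_lt hs'⟩
  obtain ⟨C, hC, hbound⟩ := hw.exists_norm_integrand_le hew
  refine ⟨hcont, 2 * C, by positivity, fun t ht => ?_⟩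
  have h : ‖iterInt (e :: w) t‖ ≤ 2 * C * t / √(1 - t) := by
    refine le_trans ?_ (integral_div_one_sub_mul_sqrt_le hC ht.1 ht.2)
    refine intervalIntegral.norm_integral_le_of_norm_le ht.1 (ae_of_all _ fun s hs => ?_)
      (intervalIntegrable_div_one_sub_mul_sqrt C ht.1 ht.2)
    exact hbound s ⟨hs.1, hs.2.trans_lt ht.2⟩
  refine ⟨h.trans ?_, fun _ => h⟩
  exact div_le_div_of_nonneg_right (mul_le_of_le_one_right (by positivity) ht.2.le)
    (Real.sqrt_nonneg _)

end Integrand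

theorem Admissible.growthBound {w : List (Option ℂ)} (hw : Admissible w) : GrowthBound w := by
  induction w with
  | nil => exact GrowthBound.nil
  | cons e w ih => exact (ih hw.2.2).cons hw

/-! ### The list of shuffles of two words -/

/-- The list, with multiplicities, of all shuffles of two words. -/
def shuffles {X : Type} : List X → List X → List (List X)
  | [], v => [v]
  | a :: u, [] => [a :: u]
  | a :: u, b :: v =>
      (shuffles u (b :: v)).map (List.cons a) ++ (shuffles (a :: u) v).map (List.cons b)

section Shuffles

variable {X : Type}

theorem perm_of_mem_shuffles {u v w : List X} (hw : w ∈ shuffles u v) : w.Perm (u ++ v) := by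
  induction u, v using shuffles.induct generalizing w with
  | case1 v => simp_all [shuffles]
  | case2 a u => simp_all [shuffles]
  | case3 a u b v ih₁ ih₂ =>
    simp only [shuffles, List.mem_append, List.mem_map] at hw
    rcases hw with ⟨w, hw, rfl⟩ | ⟨w, hw, rfl⟩
    · exact (ih₁ hw).cons a
    · exact ((ih₂ hw).cons b).trans List.perm_middle.symm

theorem count_map_cons [DecidableEq X] [BEq (List X)] [LawfulBEq (List X)]
    (a c : X) (w : List X) (L : List (List X)) :
    (L.map (List.cons a)).count (c :: w) = if a = c then L.count w else 0 := by
  split_ifs with h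
  · subst h
    exact List.count_map_of_injective _ _ (List.cons_injective) _
  · exact List.count_eq_zero.2 fun hmem => by
      obtain ⟨_, _, heq⟩ := List.mem_map.1 hmem
      exact h (List.cons.inj heq).1

theorem shc_nil_left [DecidableEq X] (v w : List X) : shc [] v w = if v = w then 1 else 0 := by
  induction w generalizing v with
  | nil => simp [shc]
  | cons c w ih => cases v <;> simp [shc, ih, ite_and]

theorem shc_nil_right [DecidableEq X] (u w : List X) : shc u [] w = if u = w then 1 else 0 := by
  induction w generalizing u with
  | nil => simp [shc]
  | cons c w ih => cases u <;> simp [shc, ih, ite_and]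

theorem count_shuffles [DecidableEq X] [BEq (List X)] [LawfulBEq (List X)]
    (u v w : List X) :
    (shuffles u v).count w = shc u v w := by
  induction u, v using shuffles.induct generalizing w with
  | case1 v => simp [shuffles, shc_nil_left, List.count_singleton]
  | case2 a u => simp [shuffles, shc_nil_right, List.count_singleton]
  | case3 a u b v ih₁ ih₂ =>
    rw [shuffles, List.count_append]
    cases w with
    | nil => simp [shc, List.count_eq_zero]
    | cons c w => rw [count_map_cons, count_map_cons, ih₁, ih₂, shc]

end Shuffles

theorem Admissible.of_mem_shuffles {u v w : List (Option ℂ)} (hu : Admissible u)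
    (hv : Admissible v) (hw : w ∈ shuffles u v) : Admissible w := by
  induction u, v using shuffles.induct generalizing w with
  | case1 v => simp_all [shuffles]
  | case2 a u => simp_all [shuffles]
  | case3 a u b v ih₁ ih₂ =>
    simp only [shuffles, List.mem_append, List.mem_map] at hw
    rcases hw with ⟨w, hw, rfl⟩ | ⟨w, hw, rfl⟩
    · refine ⟨hu.1, fun h => ?_, ih₁ hu.2.2 hv hw⟩
      have := (perm_of_mem_shuffles hw).length_eq
      simp [h] at this
    · refine ⟨hv.1, fun h => ?_, ih₂ hu hv.2.2 hw⟩
      have := (perm_of_mem_shuffles hw).length_eq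
      simp [h] at this

/-! ### The shuffle relation -/

theorem sum_iterInt_map_cons (e : Option ℂ) (T : ℝ) (L : List (List (Option ℂ)))
    (hL : ∀ w ∈ L, IntervalIntegrable (fun s => omegaForm e s * iterInt w s) volume 0 T) :
    IntervalIntegrable (fun s => omegaForm e s * (L.map (iterInt · s)).sum) volume 0 T ∧
      ((L.map (List.cons e)).map (iterInt · T)).sum =
        ∫ s in (0 : ℝ)..T, omegaForm e s * (L.map (iterInt · s)).sum := by
  induction L with
  | nil => simp
  | cons w L ih =>
    obtain ⟨hint, hsum⟩ := ih fun w' hw' => hL w' (List.mem_cons_of_mem _ hw')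
    have hw := hL w List.mem_cons_self
    simp only [List.map_cons, List.sum_cons, mul_add]
    refine ⟨hw.add hint, ?_⟩
    rw [intervalIntegral.integral_add hw hint, hsum, iterInt]

theorem iterInt_mul_iterInt {u v : List (Option ℂ)} (hu : Admissible u) (hv : Admissible v)
    {T : ℝ} (hT₀ : 0 ≤ T) (hT₁ : T ≤ 1)
    (hT : T < 1 ∨ u.head? ≠ some (some 1) ∧ v.head? ≠ some (some 1)) :
    iterInt u T * iterInt v T = ((shuffles u v).map (iterInt · T)).sum := by
  induction u, v using shuffles.induct generalizing T with
  | case1 v => simp [shuffles, iterInt]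
  | case2 a u => simp [shuffles, iterInt]
  | case3 a u b v ih₁ ih₂ =>
    have hTa : T < 1 ∨ a ≠ some 1 := hT.imp id fun h ha => h.1 (by simp [ha])
    have hTb : T < 1 ∨ b ≠ some 1 := hT.imp id fun h hb => h.2 (by simp [hb])
    have gu := hu.2.2.growthBound
    have gv := hv.2.2.growthBound
    have hparts := intervalIntegral.integral_deriv_mul_eq_sub_of_hasDerivAt
      (gu.continuousOn_cons hu hT₀ hT₁ hTa) (gv.continuousOn_cons hv hT₀ hT₁ hTb)
      (fun x hx => gu.hasDerivAt_cons hu (by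
        rw [min_eq_left hT₀, max_eq_right hT₀] at hx; exact ⟨hx.1, hx.2.trans_le hT₁⟩))
      (fun x hx => gv.hasDerivAt_cons hv (by
        rw [min_eq_left hT₀, max_eq_right hT₀] at hx; exact ⟨hx.1, hx.2.trans_le hT₁⟩))
      (gu.intervalIntegrable_integrand hu hT₀ hT₁ hTa)
      (gv.intervalIntegrable_integrand hv hT₀ hT₁ hTb)
    have hzero : iterInt (a :: u) 0 = 0 := by simp [iterInt]
    rw [hzero, zero_mul, sub_zero] at hparts
    have hmem₁ : ∀ w ∈ shuffles u (b :: v), Admissible (a :: w) := fun w hw =>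
      hu.of_mem_shuffles hv (by simp [shuffles, hw])
    have hmem₂ : ∀ w ∈ shuffles (a :: u) v, Admissible (b :: w) := fun w hw =>
      hu.of_mem_shuffles hv (by simp [shuffles, hw])
    obtain ⟨hint₁, hsum₁⟩ := sum_iterInt_map_cons a T (shuffles u (b :: v)) fun w hw =>
      (hmem₁ w hw).2.2.growthBound.intervalIntegrable_integrand (hmem₁ w hw) hT₀ hT₁ hTa
    obtain ⟨hint₂, hsum₂⟩ := sum_iterInt_map_cons b T (shuffles (a :: u) v) fun w hw =>
      (hmem₂ w hw).2.2.growthBound.intervalIntegrable_integrand (hmem₂ w hw) hT₀ hT₁ hTb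
    rw [← hparts, shuffles, List.map_append, List.sum_append, hsum₁, hsum₂,
      ← intervalIntegral.integral_add hint₁ hint₂]
    refine intervalIntegral.integral_congr_Ioo_of_le hT₀ fun s hs => ?_
    have hs₁ : s < 1 := hs.2.trans_le hT₁
    rw [← ih₁ hu.2.2 hv hs.1.le hs₁.le (Or.inl hs₁), ← ih₂ hu hv.2.2 hs.1.le hs₁.le (Or.inl hs₁)]
    ring

theorem admissible_of_last_ne {w : List (Option ℂ)}
    (hroots : ∀ z : ℂ, some z ∈ w → ∃ m : ℕ, 0 < m ∧ z ^ m = 1)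
    (hlast : w.getLast? ≠ some none) : Admissible w := by
  induction w with
  | nil => trivial
  | cons e w ih =>
    refine ⟨?_, ?_, ih (fun z hz => hroots z (List.mem_cons_of_mem _ hz)) ?_⟩
    · rintro z rfl
      obtain ⟨m, hm, hz⟩ := hroots z List.mem_cons_self
      exact Complex.norm_eq_one_of_pow_eq_one hz hm.ne'
    · rintro rfl rfl
      simp at hlast
    · cases w with
      | nil => simp
      | cons e' w => simpa using hlast


open Classical in
/-- Iterated integrals satisfy the shuffle relation: for convergent
words `u`, `v` over `X_Γ` (not beginning with `x₁` nor ending with `x₀`, letters being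
roots of unity), `I(u)·I(v) = I(u ⧢ v)`. -/
theorem iterInt_shuffle (u v : List (Option ℂ))
    (hroots : ∀ z : ℂ, some z ∈ u ++ v → ∃ m : ℕ, 0 < m ∧ z ^ m = 1)
    (hu₁ : u.head? ≠ some (some 1)) (hu₀ : u.getLast? ≠ some none)
    (hv₁ : v.head? ≠ some (some 1)) (hv₀ : v.getLast? ≠ some none) :
    iterInt u 1 * iterInt v 1 =
      ∑ w ∈ (u ++ v).permutations.toFinset, (shc u v w : ℂ) * iterInt w 1 := by
  have hu := admissible_of_last_ne
    (fun z hz => hroots z (List.mem_append_left _ hz)) hu₀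
  have hv := admissible_of_last_ne
    (fun z hz => hroots z (List.mem_append_right _ hz)) hv₀
  rw [iterInt_mul_iterInt hu hv zero_le_one le_rfl (Or.inr ⟨hu₁, hv₁⟩),
    Finset.sum_list_map_count]
  simp only [count_shuffles, nsmul_eq_mul]
  refine Finset.sum_subset (fun w hw => ?_) fun w _ hw => ?_
  · simpa using perm_of_mem_shuffles (List.mem_toFinset.1 hw)
  · rw [← count_shuffles, List.count_eq_zero.2 fun h => hw (List.mem_toFinset.2 h)]
    simp
end
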